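/- Let (X,f) be a TDS, φ: X → ℝ continuous, and μ ∈ M(X,f) any invariant measure with h_μ(f) < ∞. Then SP̄_μ(f,φ) := lim_{ε→0} inf_{F∋μ} limsup_{n→∞} (1/n) log P(F;φ,n,ε) ≤ h_μ(f) + ∫_X φ dμ. -/

import Mathlib

open MeasureTheory Filter Set
open scoped ENNReal NNReal

namespace Paper

variable {X : Type*}

/-- Birkhoff sum `S_n φ(x) = ∑_{i<n} φ(f^i x)`. -/
def birk (f : X → X) (φ : X → ℝ) (n : ℕ) (x : X) : ℝ :=
  ∑ i ∈ Finset.range n, φ (f^[i] x)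

section Metric

variable [MetricSpace X]

/-- The Bowen ball `B_n(x, ε) = {y : d_n(x,y) < ε}`. -/
def bowenBall (f : X → X) (x : X) (n : ℕ) (ε : ℝ) : Set X :=
  {y | ∀ i < n, dist (f^[i] x) (f^[i] y) < ε}

/-- The number of indices `0 ≤ j ≤ n-1` with `dist (f^j x, f^j y) > ε`. -/
noncomputable def sepCount (f : X → X) (ε : ℝ) (n : ℕ) (x y : X) : ℕ :=
  Nat.card {j : ℕ // j < n ∧ ε < dist (f^[j] x) (f^[j] y)}

/-- `A` is an `(n,ε)`-separated set. -/
def IsNSep (f : X → X) (n : ℕ) (ε : ℝ) (A : Set X) : Prop :=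
  ∀ x ∈ A, ∀ y ∈ A, x ≠ y → ∃ j < n, ε < dist (f^[j] x) (f^[j] y)

/-- `A` is a `(δ,n,ε)`-separated set. -/
def IsDeltaSep (f : X → X) (δ : ℝ) (n : ℕ) (ε : ℝ) (A : Set X) : Prop :=
  ∀ x ∈ A, ∀ y ∈ A, x ≠ y → δ * n ≤ (sepCount f ε n x y : ℝ)

end Metric

section Entropy

variable [MeasurableSpace X]

/-- A finite measurable partition of `X`. -/
def IsFinPartition (s : Finset (Set X)) : Prop :=
  (∀ A ∈ s, MeasurableSet A) ∧ ⋃₀ (s : Set (Set X)) = Set.univ ∧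
    (s : Set (Set X)).Pairwise Disjoint

/-- The entropy `H(μ, ⋁_{i<n} f^{-i} ξ)` of the `n`-th dynamical refinement of the
partition `s` (with the convention `0 · log 0 = 0`). -/
noncomputable def dynH (f : X → X) (μ : Measure X) (s : Finset (Set X)) (n : ℕ) : ℝ :=
  -∑ w : Fin n → {A // A ∈ s},
      (μ (⋂ i : Fin n, f^[(i : ℕ)] ⁻¹' ((w i : Set X)))).toReal *
        Real.log (μ (⋂ i : Fin n, f^[(i : ℕ)] ⁻¹' ((w i : Set X)))).toReal

/-- The Kolmogorov–Sinai entropy `h_μ(f)`, as an extended real: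
`sup_ξ lim_n H(μ, ξ^n)/n`. -/
noncomputable def ksEntropy (f : X → X) (μ : Measure X) : EReal :=
  ⨆ (s : Finset (Set X)) (_ : IsFinPartition s),
    Filter.atTop.liminf (fun n : ℕ => ((dynH f μ s n / n : ℝ) : EReal))

end Entropy

section Empiric

variable [MeasurableSpace X]

/-- The empiric measure `E_n(x) = (1/n) ∑_{k<n} δ_{f^k x}`. -/
noncomputable def empiric (f : X → X) (x : X) (n : ℕ) : Measure X :=
  (n : ℝ≥0∞)⁻¹ • ∑ k ∈ Finset.range n, Measure.dirac (f^[k] x)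

end Empiric

section WeakStar

variable [MeasurableSpace X] [TopologicalSpace X] [OpensMeasurableSpace X]

/-- The set `X_{n,F}` of points whose `n`-th empiric measure lies in `F ⊆ M(X)`
(where `M(X)`, the space of Borel probability measures, carries the weak-star topology). -/
def Xnf (f : X → X) (n : ℕ) (F : Set (ProbabilityMeasure X)) : Set X :=
  {x | ∃ h : IsProbabilityMeasure (empiric f x n),
        (⟨empiric f x n, h⟩ : ProbabilityMeasure X) ∈ F}

end WeakStar

section SepPressure

variable [MetricSpace X] [MeasurableSpace X] [OpensMeasurableSpace X]

/-- `P(F;φ,n,ε)`: the supremum of `∑_{x∈E} e^{S_nφ(x)}` over `(n,ε)`-separated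
subsets `E ⊆ X_{n,F}`. -/
noncomputable def Psep (f : X → X) (φ : X → ℝ) (F : Set (ProbabilityMeasure X))
    (n : ℕ) (ε : ℝ) : ℝ≥0∞ :=
  ⨆ (E : Finset X) (_ : ↑E ⊆ Xnf f n F ∧ IsNSep f n ε ↑E),
    ∑ x ∈ E, ENNReal.ofReal (Real.exp (birk f φ n x))

/-- `P(F;φ,δ,n,ε)`: the analogue of `P(F;φ,n,ε)` with `(δ,n,ε)`-separated sets. -/
noncomputable def PsepDelta (f : X → X) (φ : X → ℝ) (F : Set (ProbabilityMeasure X))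
    (δ : ℝ) (n : ℕ) (ε : ℝ) : ℝ≥0∞ :=
  ⨆ (E : Finset X) (_ : ↑E ⊆ Xnf f n F ∧ IsDeltaSep f δ n ε ↑E),
    ∑ x ∈ E, ENNReal.ofReal (Real.exp (birk f φ n x))

/-- `SP̄_ν(f,φ) = lim_{ε→0} inf_{F∋ν} limsup_n (1/n) log P(F;φ,n,ε)`
(the limit in `ε` being a supremum by monotonicity). -/
noncomputable def SPbar (f : X → X) (φ : X → ℝ) (ν : ProbabilityMeasure X) : EReal :=
  ⨆ (ε : ℝ) (_ : 0 < ε), ⨅ (F : Set (ProbabilityMeasure X)) (_ : F ∈ nhds ν),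
    Filter.atTop.limsup (fun n : ℕ => (((n : ℝ)⁻¹ : ℝ) : EReal) * (Psep f φ F n ε).log)

/-- `S̲P_ν(f,φ) = lim_{ε→0} inf_{F∋ν} liminf_n (1/n) log P(F;φ,n,ε)`. -/
noncomputable def SPlow (f : X → X) (φ : X → ℝ) (ν : ProbabilityMeasure X) : EReal :=
  ⨆ (ε : ℝ) (_ : 0 < ε), ⨅ (F : Set (ProbabilityMeasure X)) (_ : F ∈ nhds ν),
    Filter.atTop.liminf (fun n : ℕ => (((n : ℝ)⁻¹ : ℝ) : EReal) * (Psep f φ F n ε).log)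

/-- `SP̄'_ν(f,φ)`: as `SP̄_ν(f,φ)` but via `(δ,n,ε)`-separated sets, with the limit
`δ → 0` taken before `ε → 0` (both limits being suprema by monotonicity). -/
noncomputable def SPbar' (f : X → X) (φ : X → ℝ) (ν : ProbabilityMeasure X) : EReal :=
  ⨆ (ε : ℝ) (_ : 0 < ε), ⨆ (δ : ℝ) (_ : 0 < δ),
    ⨅ (F : Set (ProbabilityMeasure X)) (_ : F ∈ nhds ν),
      Filter.atTop.limsup (fun n : ℕ =>
        (((n : ℝ)⁻¹ : ℝ) : EReal) * (PsepDelta f φ F δ n ε).log)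

/-- `S̲P'_ν(f,φ)`. -/
noncomputable def SPlow' (f : X → X) (φ : X → ℝ) (ν : ProbabilityMeasure X) : EReal :=
  ⨆ (ε : ℝ) (_ : 0 < ε), ⨆ (δ : ℝ) (_ : 0 < δ),
    ⨅ (F : Set (ProbabilityMeasure X)) (_ : F ∈ nhds ν),
      Filter.atTop.liminf (fun n : ℕ =>
        (((n : ℝ)⁻¹ : ℝ) : EReal) * (PsepDelta f φ F δ n ε).log)

end SepPressure

end Paper

open Paper

/-!
Code `X` by a finite partition whose cells have diameter at most `ε` and `μ`-null frontiers; an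
`(n, ε)`-separated set then injects into the names of length `n`. Give the names of length `q`
positive weights `p` of total mass at most one whose cross entropy `∑ μ[w] * -log (p w)` is close
to the entropy of the `q`-th refinement. Since the frontiers are null, the integrals of `-log p`
and of `φ` vary continuously with the measure at `μ`, so some neighbourhood `F` of `μ` bounds the
Birkhoff sums of both on every `X_{n,F}`. One of the `q` ways of cutting a name of length `n` into
`q`-blocks carries at most the fraction `1 / q` of the Birkhoff sum of `-log p`, and since `p` has
mass at most one, the number of names with cost at most `K` is at most `exp K` up to a factor
independent of `n`. Hence `P(F;φ,n,ε)` grows at a rate of at most (entropy of the `q`-th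
refinement) / `q` + `∫ φ dμ` up to an arbitrarily small error.
-/

open scoped Topology BoundedContinuousFunction

namespace Paper

section Names

variable {X S : Type*}

/-- The `q`-name of `x`: the labels of `x, f x, …, f^(q-1) x` under the coding map `c : X → S`.
Finite partitions enter the argument through such coding maps. -/
def itinerary (f : X → X) (c : X → S) (q : ℕ) (x : X) : Fin q → S :=
  fun k => c (f^[k] x)

variable {f : X → X} {c : X → S} {q : ℕ}

lemma itinerary_eq_iff {x y : X} :
    itinerary f c q x = itinerary f c q y ↔ ∀ k < q, c (f^[k] x) = c (f^[k] y) :=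
  funext_iff.trans Fin.forall_iff

lemma itinerary_preimage_singleton (w : Fin q → S) :
    itinerary f c q ⁻¹' {w} = ⋂ k : Fin q, f^[k] ⁻¹' (c ⁻¹' {w k}) := by
  ext x
  simp [itinerary, funext_iff]

lemma measurableSet_itinerary_preimage_singleton [MeasurableSpace X] (hf : Measurable f)
    (hc : ∀ s, MeasurableSet (c ⁻¹' {s})) (w : Fin q → S) :
    MeasurableSet (itinerary f c q ⁻¹' {w}) := by
  rw [itinerary_preimage_singleton]
  exact .iInter fun k => hf.iterate k (hc _)

lemma itinerary_congr_of_blocks {m r n : ℕ} (hq : 0 < q) (hr : r ≤ q) (hn : n ≤ q * m + q)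
    {x y : X} (hfirst : itinerary f c q x = itinerary f c q y)
    (hblock : ∀ j < m, itinerary f c q (f^[r + q * j] x) = itinerary f c q (f^[r + q * j] y))
    (hlast : itinerary f c q (f^[q * m] x) = itinerary f c q (f^[q * m] y)) :
    itinerary f c n x = itinerary f c n y := by
  simp only [itinerary_eq_iff, ← Function.iterate_add_apply] at *
  intro i hi
  rcases lt_or_ge i r with hir | hri
  · exact hfirst i (hir.trans_le hr)
  rcases lt_or_ge (i - r) (q * m) with him | hmi
  · have hmod : (i - r) % q + (r + q * ((i - r) / q)) = i := by
      have := Nat.mod_add_div (i - r) q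
      omega
    simpa only [hmod] using
      hblock ((i - r) / q) (Nat.div_lt_of_lt_mul him) ((i - r) % q) (Nat.mod_lt _ hq)
  · simpa only [Nat.sub_add_cancel (show q * m ≤ i by omega)] using
      hlast (i - q * m) (by omega)

end Names

section Counting

lemma sum_comp_le_sum_of_injOn {X Z M : Type*} [Fintype Z] [AddCommMonoid M] [PartialOrder M]
    [IsOrderedAddMonoid M] {E : Finset X} {e : X → Z} (he : InjOn e E) {g : Z → M}
    (hg : ∀ z, 0 ≤ g z) : ∑ x ∈ E, g (e x) ≤ ∑ z, g z := by
  classical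
  rw [← Finset.sum_image (f := g) he]
  exact Finset.sum_le_univ_sum_of_nonneg hg

variable {X S : Type*} [Fintype S] {f : X → X} {c : X → S} {q n : ℕ} {p : (Fin q → S) → ℝ}
  {E : Finset X}

lemma sum_prod_itinerary_le (hp : ∀ w, 0 ≤ p w) (hE : InjOn (itinerary f c n) E) {m r : ℕ}
    (hq : 0 < q) (hr : r ≤ q) (hn : n ≤ q * m + q) :
    ∑ x ∈ E, ∏ j : Fin m, p (itinerary f c q (f^[r + q * j] x)) ≤
      (Fintype.card (Fin q → S) : ℝ) ^ 2 * (∑ w, p w) ^ m := by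
  let blocks (x : X) : (Fin q → S) × (Fin m → Fin q → S) × (Fin q → S) :=
    (itinerary f c q x, fun j => itinerary f c q (f^[r + q * j] x),
      itinerary f c q (f^[q * m] x))
  have hinj : InjOn blocks E := fun x hx y hy hxy => by
    obtain ⟨hfirst, hblock, hlast⟩ := by simpa only [blocks, Prod.mk.injEq] using hxy
    exact hE hx hy (itinerary_congr_of_blocks hq hr hn hfirst
      (fun j hj => congrFun hblock ⟨j, hj⟩) hlast)
  refine (sum_comp_le_sum_of_injOn hinj (g := fun z => ∏ j, p (z.2.1 j))
    fun z => Finset.prod_nonneg fun j _ => hp _).trans_eq ?_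
  simp only [Fintype.sum_pow, Fintype.sum_prod_type, Finset.sum_const, Finset.card_univ,
    nsmul_eq_mul, ← Finset.mul_sum]
  ring

lemma sum_range_mul_eq_sum_sum_residues {M : Type*} [AddCommMonoid M] (u : ℕ → M) (q m : ℕ) :
    ∑ i ∈ Finset.range (m * q), u i = ∑ r ∈ Finset.range q, ∑ j : Fin m, u (r + q * j) := by
  rw [Finset.sum_comm, Finset.sum_range, ← finProdFinEquiv.sum_comp, Fintype.sum_prod_type]
  exact Finset.sum_congr rfl fun j _ => (Finset.sum_range fun r => u (r + q * j)).symm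

/-- Some residue class modulo `q` carries at most the average cost `K / q`. -/
lemma exp_neg_div_le_sum_prod {u : ℕ → ℝ} (hu0 : ∀ i, 0 < u i) (hu1 : ∀ i, u i ≤ 1) (hq : 0 < q)
    {m : ℕ} (hm : m * q ≤ n) {K : ℝ} (hK : ∑ i ∈ Finset.range n, -Real.log (u i) ≤ K) :
    Real.exp (-(K / q)) ≤ ∑ r ∈ Finset.range q, ∏ j : Fin m, u (r + q * j) := by
  have hsum : ∑ r ∈ Finset.range q, ∑ j : Fin m, -Real.log (u (r + q * j)) ≤
      ∑ _r ∈ Finset.range q, K / q := by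
    rw [← sum_range_mul_eq_sum_sum_residues (fun i => -Real.log (u i)), Finset.sum_const,
      Finset.card_range, nsmul_eq_mul, mul_div_cancel₀ _ (Nat.cast_ne_zero.2 hq.ne')]
    refine (Finset.sum_le_sum_of_subset_of_nonneg (Finset.range_subset_range.2 hm) ?_).trans hK
    exact fun i _ _ => neg_nonneg.2 (Real.log_nonpos (hu0 i).le (hu1 i))
  obtain ⟨r, hr, hrK⟩ := Finset.exists_le_of_sum_le (Finset.nonempty_range_iff.2 hq.ne') hsum
  calc Real.exp (-(K / q))
      ≤ Real.exp (-∑ j : Fin m, -Real.log (u (r + q * j))) := by gcongr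
    _ = ∏ j : Fin m, u (r + q * j) := by
        simp only [Finset.sum_neg_distrib, neg_neg, Real.exp_sum, Real.exp_log (hu0 _)]
    _ ≤ ∑ r ∈ Finset.range q, ∏ j : Fin m, u (r + q * j) :=
        Finset.single_le_sum (f := fun r => ∏ j : Fin m, u (r + q * j))
          (fun r _ => Finset.prod_nonneg fun j _ => (hu0 _).le) hr

lemma card_le_of_birk_neg_log_le (hp0 : ∀ w, 0 < p w) (hp1 : ∑ w, p w ≤ 1) (hq : 0 < q)
    (hE : InjOn (itinerary f c n) E) {K : ℝ}
    (hK : ∀ x ∈ E, birk f (fun y => -Real.log (p (itinerary f c q y))) n x ≤ K) :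
    (E.card : ℝ) ≤ q * (Fintype.card (Fin q → S) : ℝ) ^ 2 * Real.exp (K / q) := by
  have hp1' (w) : p w ≤ 1 :=
    (Finset.single_le_sum (fun v _ => (hp0 v).le) (Finset.mem_univ w)).trans hp1
  have hn : n ≤ q * (n / q) + q := by
    have := Nat.lt_mul_div_succ n hq
    rw [Nat.mul_succ] at this
    exact this.le
  rw [← div_le_iff₀ (Real.exp_pos _), div_eq_mul_inv, ← Real.exp_neg]
  calc (E.card : ℝ) * Real.exp (-(K / q)) = ∑ _x ∈ E, Real.exp (-(K / q)) := by simp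
    _ ≤ ∑ x ∈ E, ∑ r ∈ Finset.range q,
          ∏ j : Fin (n / q), p (itinerary f c q (f^[r + q * j] x)) :=
        Finset.sum_le_sum fun x hx => exp_neg_div_le_sum_prod (fun _ => hp0 _)
          (fun _ => hp1' _) hq (Nat.div_mul_le_self n q) (hK x hx)
    _ = ∑ r ∈ Finset.range q, ∑ x ∈ E,
          ∏ j : Fin (n / q), p (itinerary f c q (f^[r + q * j] x)) := Finset.sum_comm
    _ ≤ ∑ _r ∈ Finset.range q, (Fintype.card (Fin q → S) : ℝ) ^ 2 := by
        refine Finset.sum_le_sum fun r hr => ?_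
        refine (sum_prod_itinerary_le (fun w => (hp0 w).le) hE hq (Finset.mem_range.1 hr).le
          hn).trans (mul_le_of_le_one_right (by positivity) ?_)
        exact pow_le_one₀ (Finset.sum_nonneg fun w _ => (hp0 w).le) hp1
    _ = q * (Fintype.card (Fin q → S) : ℝ) ^ 2 := by simp

end Counting

section CrossEntropy

variable {W : Type*} [Fintype W]

/-- The terms with `a w = 0`, where the logarithm blows up as `δ → 0`, vanish identically. -/
lemma tendsto_sum_mul_neg_log_smoothed (a : W → ℝ) :
    Tendsto (fun δ : ℝ => ∑ w, a w * -Real.log ((a w + δ) / (1 + Fintype.card W * δ))) (𝓝 0)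
      (𝓝 (∑ w, Real.negMulLog (a w))) := by
  refine tendsto_finsetSum _ fun w _ => ?_
  rcases eq_or_ne (a w) 0 with hw | hw
  · simp [hw]
  · have hcont : ContinuousAt
        (fun δ : ℝ => a w * -Real.log ((a w + δ) / (1 + Fintype.card W * δ))) 0 := by
      fun_prop (disch := simp [hw])
    simpa [ContinuousAt, Real.negMulLog] using hcont

lemma exists_pos_weights_sum_mul_neg_log_lt {a : W → ℝ} (ha : ∀ w, 0 ≤ a w)
    (ha1 : ∑ w, a w ≤ 1) {b : ℝ} (hb : ∑ w, Real.negMulLog (a w) < b) :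
    ∃ p : W → ℝ, (∀ w, 0 < p w) ∧ ∑ w, p w ≤ 1 ∧ ∑ w, a w * -Real.log (p w) < b := by
  obtain ⟨δ, hδb, hδ⟩ := (((tendsto_sum_mul_neg_log_smoothed a).eventually_lt_const hb).filter_mono
    nhdsWithin_le_nhds).and self_mem_nhdsWithin |>.exists (f := 𝓝[>] 0)
  have hδ : 0 < δ := hδ
  have hZ : 0 < 1 + Fintype.card W * δ := by positivity
  refine ⟨_, fun w => div_pos (add_pos_of_nonneg_of_pos (ha w) hδ) hZ, ?_, hδb⟩
  rw [← Finset.sum_div, div_le_one hZ, Finset.sum_add_distrib, Finset.sum_const,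
    Finset.card_univ, nsmul_eq_mul]
  gcongr

end CrossEntropy

section NullFrontier

variable {X : Type*} [TopologicalSpace X]

lemma frontier_iInter_subset {ι : Type*} [Finite ι] (A : ι → Set X) :
    frontier (⋂ i, A i) ⊆ ⋃ i, frontier (A i) := by
  rintro x ⟨hcl, hint⟩
  rw [interior_iInter_of_finite, mem_iInter, not_forall] at hint
  obtain ⟨i, hi⟩ := hint
  exact mem_iUnion.2 ⟨i, closure_mono (iInter_subset A i) hcl, hi⟩

variable [MeasurableSpace X] {μ : Measure X}

lemma null_frontier_diff {A B : Set X} (hA : μ (frontier A) = 0) (hB : μ (frontier B) = 0) :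
    μ (frontier (A \ B)) = 0 :=
  sdiff_eq A B ▸ null_frontier_inter hA ((frontier_compl B).symm ▸ hB)

lemma null_frontier_preimage {Y : Type*} [TopologicalSpace Y] [MeasurableSpace Y] {ν : Measure Y}
    {g : X → Y} (hg : Continuous g) (hgμ : Measure.QuasiMeasurePreserving g μ ν) {A : Set Y}
    (hA : ν (frontier A) = 0) : μ (frontier (g ⁻¹' A)) = 0 :=
  measure_mono_null (hg.frontier_preimage_subset A) (hgμ.preimage_null hA)

lemma null_frontier_itinerary_preimage_singleton {S : Type*} {f : X → X} (hf : Continuous f)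
    (hinv : Measure.QuasiMeasurePreserving f μ μ) {c : X → S}
    (hc : ∀ s, μ (frontier (c ⁻¹' {s})) = 0) {q : ℕ} (w : Fin q → S) :
    μ (frontier (itinerary f c q ⁻¹' {w})) = 0 := by
  rw [itinerary_preimage_singleton]
  refine measure_mono_null (frontier_iInter_subset _) (measure_iUnion_null fun k => ?_)
  exact null_frontier_preimage (hf.iterate k) (hinv.iterate k) (hc _)

end NullFrontier

section CodedIntegral

variable {X W : Type*} [MeasurableSpace X] {c : X → W}

lemma integral_comp_of_fintype [Fintype W] (hc : ∀ w, MeasurableSet (c ⁻¹' {w})) (h : W → ℝ)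
    (ν : Measure X) [IsFiniteMeasure ν] : ∫ x, h (c x) ∂ν = ∑ w, ν.real (c ⁻¹' {w}) * h w := by
  let : MeasurableSpace W := ⊤
  have hcm : Measurable c := measurable_to_countable' hc
  rw [← integral_map hcm.aemeasurable (by fun_prop), integral_fintype .of_finite]
  simp [map_measureReal_apply hcm]

lemma continuousAt_integral_comp_of_null_frontier [Finite W] [TopologicalSpace X]
    [OpensMeasurableSpace X] [HasOuterApproxClosed X] (hc : ∀ w, MeasurableSet (c ⁻¹' {w}))
    {μ : ProbabilityMeasure X} (hμ : ∀ w, (μ : Measure X) (frontier (c ⁻¹' {w})) = 0)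
    (h : W → ℝ) :
    ContinuousAt (fun ν : ProbabilityMeasure X => ∫ x, h (c x) ∂(ν : Measure X)) μ := by
  have := Fintype.ofFinite W
  simp only [integral_comp_of_fintype hc]
  refine tendsto_finsetSum _ fun w _ => Tendsto.mul_const _ ?_
  exact (ENNReal.tendsto_toReal (measure_ne_top _ _)).comp
    (ProbabilityMeasure.tendsto_measure_of_null_frontier_of_tendsto' tendsto_id (hμ w))

lemma sum_measureReal_preimage_singleton_eq_one [Fintype W]
    (hc : ∀ w, MeasurableSet (c ⁻¹' {w})) (μ : Measure X) [IsProbabilityMeasure μ] :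
    ∑ w, μ.real (c ⁻¹' {w}) = 1 := by
  simpa using (integral_comp_of_fintype hc (fun _ => 1) μ).symm

end CodedIntegral

section Empiric

variable {X : Type*} [MeasurableSpace X]

lemma birk_eq_mul_integral_empiric (f : X → X) {g : X → ℝ} (hg : Measurable g) (n : ℕ) (x : X) :
    birk f g n x = n * ∫ y, g y ∂(empiric f x n) := by
  rcases eq_or_ne n 0 with rfl | hn
  · simp [birk]
  have hint : ∀ i ∈ Finset.range n, Integrable g (Measure.dirac (f^[i] x)) := fun i _ =>
    integrable_dirac' hg.stronglyMeasurable enorm_lt_top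
  simp [birk, empiric, integral_smul_measure, integral_finsetSum_measure hint,
    integral_dirac' _ _ hg.stronglyMeasurable, hn]

lemma birk_le_of_mem_Xnf [TopologicalSpace X] [OpensMeasurableSpace X] {f : X → X} {g : X → ℝ}
    (hg : Measurable g) {F : Set (ProbabilityMeasure X)} {b : ℝ}
    (hF : ∀ ν ∈ F, ∫ y, g y ∂(ν : Measure X) ≤ b) {n : ℕ} {x : X} (hx : x ∈ Xnf f n F) :
    birk f g n x ≤ n * b := by
  obtain ⟨_, hxF⟩ := hx
  rw [birk_eq_mul_integral_empiric f hg]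
  exact mul_le_mul_of_nonneg_left (hF _ hxF) n.cast_nonneg

end Empiric

section CodedPressure

variable {X S : Type*} [MetricSpace X] {f : X → X} {c : X → S} {ε : ℝ}

lemma IsNSep.injOn_itinerary (hc : ∀ x y, c x = c y → dist x y ≤ ε) {n : ℕ} {E : Set X}
    (hE : IsNSep f n ε E) : InjOn (itinerary f c n) E := by
  intro x hx y hy hxy
  by_contra hne
  obtain ⟨j, hj, hlt⟩ := hE x hx y hy hne
  exact hlt.not_ge (hc _ _ (itinerary_eq_iff.1 hxy j hj))

variable [Fintype S] [MeasurableSpace X] [OpensMeasurableSpace X] {q : ℕ}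

lemma Psep_le_mul_exp (hf : Measurable f) (hcm : ∀ s, MeasurableSet (c ⁻¹' {s}))
    (hc : ∀ x y, c x = c y → dist x y ≤ ε) {φ : X → ℝ} (hφ : Measurable φ) (hq : 0 < q)
    {p : (Fin q → S) → ℝ} (hp0 : ∀ w, 0 < p w) (hp1 : ∑ w, p w ≤ 1)
    {F : Set (ProbabilityMeasure X)} {a b : ℝ}
    (hFp : ∀ ν ∈ F, ∫ x, -Real.log (p (itinerary f c q x)) ∂(ν : Measure X) ≤ a)
    (hFφ : ∀ ν ∈ F, ∫ x, φ x ∂(ν : Measure X) ≤ b) (n : ℕ) :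
    Psep f φ F n ε ≤ ENNReal.ofReal (q * (Fintype.card (Fin q → S) : ℝ) ^ 2) *
      EReal.exp (((a / q + b : ℝ) : EReal) * n) := by
  have hcost : Measurable fun x => -Real.log (p (itinerary f c q x)) := by
    let : MeasurableSpace (Fin q → S) := ⊤
    have hitin : Measurable (itinerary f c q) :=
      measurable_to_countable' (measurableSet_itinerary_preimage_singleton hf hcm)
    exact (measurable_from_top (f := fun w => -Real.log (p w))).comp hitin
  refine iSup₂_le fun E hE => ?_
  obtain ⟨hEF, hsep⟩ := hE
  have hcard := card_le_of_birk_neg_log_le hp0 hp1 hq (hsep.injOn_itinerary hc)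
    fun x hx => birk_le_of_mem_Xnf hcost hFp (hEF hx)
  rw [← EReal.coe_natCast, ← EReal.coe_mul, EReal.exp_coe, ← ENNReal.ofReal_mul (by positivity),
    ← ENNReal.ofReal_sum_of_nonneg fun x _ => (Real.exp_pos _).le]
  refine ENNReal.ofReal_le_ofReal ?_
  calc ∑ x ∈ E, Real.exp (birk f φ n x) ≤ ∑ _x ∈ E, Real.exp (n * b) :=
        Finset.sum_le_sum fun x hx =>
          Real.exp_le_exp.2 (birk_le_of_mem_Xnf hφ hFφ (hEF hx))
    _ = E.card * Real.exp (n * b) := by simp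
    _ ≤ q * (Fintype.card (Fin q → S) : ℝ) ^ 2 * Real.exp (n * a / q) * Real.exp (n * b) := by
        gcongr
    _ = q * (Fintype.card (Fin q → S) : ℝ) ^ 2 * Real.exp ((a / q + b) * n) := by
        rw [mul_assoc, ← Real.exp_add]
        ring_nf

lemma iInf_expGrowthSup_Psep_le (hf : Continuous f) (φ : X →ᵇ ℝ) {μ : ProbabilityMeasure X}
    (hinv : Measure.QuasiMeasurePreserving f (μ : Measure X) μ)
    (hcm : ∀ s, MeasurableSet (c ⁻¹' {s}))
    (hcfr : ∀ s, (μ : Measure X) (frontier (c ⁻¹' {s})) = 0)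
    (hc : ∀ x y, c x = c y → dist x y ≤ ε) (hq : 0 < q) :
    ⨅ F ∈ 𝓝 μ, ExpGrowth.expGrowthSup (Psep f φ F · ε) ≤
      (((∑ w, Real.negMulLog ((μ : Measure X).real (itinerary f c q ⁻¹' {w}))) / q +
        ∫ x, φ x ∂(μ : Measure X) : ℝ) : EReal) := by
  set H := ∑ w, Real.negMulLog ((μ : Measure X).real (itinerary f c q ⁻¹' {w}))
  set I := ∫ x, φ x ∂(μ : Measure X)
  have hq' : (0 : ℝ) < q := Nat.cast_pos.2 hq
  have hwm := measurableSet_itinerary_preimage_singleton (q := q) hinv.measurable hcm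
  refine EReal.le_of_forall_lt_iff_le.1 fun z hz => ?_
  obtain ⟨b, hIb, hbz⟩ : ∃ b, I < b ∧ b < z - H / q :=
    exists_between (by linarith [EReal.coe_lt_coe_iff.1 hz])
  have hHb : H < (z - b) * q := by rw [← div_lt_iff₀ hq']; linarith
  obtain ⟨p, hp0, hp1, hp⟩ := exists_pos_weights_sum_mul_neg_log_lt
    (fun w => measureReal_nonneg) (sum_measureReal_preimage_singleton_eq_one hwm (μ : Measure X)).le
    hHb
  rw [← integral_comp_of_fintype hwm (fun w => -Real.log (p w))] at hp
  have hwfr := null_frontier_itinerary_preimage_singleton (q := q) hf hinv hcfr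
  have hFp := (continuousAt_integral_comp_of_null_frontier hwm hwfr
    fun w => -Real.log (p w)).eventually_lt_const hp
  have hFφ := (ProbabilityMeasure.continuous_integral_boundedContinuousFunction
    φ).continuousAt.eventually_lt_const hIb
  obtain ⟨F, hFμ, hF⟩ := (hFp.and hFφ).exists_mem
  refine iInf₂_le_of_le F hFμ ?_
  have hle (n : ℕ) := Psep_le_mul_exp hinv.measurable hcm hc φ.continuous.measurable hq hp0 hp1
    (fun ν hν => (hF ν hν).1.le) (fun ν hν => (hF ν hν).2.le) n
  rw [mul_div_cancel_right₀ _ hq'.ne', sub_add_cancel] at hle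
  exact (ExpGrowth.expGrowthSup_le_of_eventually_le ENNReal.ofReal_ne_top
    (.of_forall hle)).trans_eq ExpGrowth.expGrowthSup_exp

end CodedPressure

section Partition

variable {X : Type*} [MeasurableSpace X]

lemma IsFinPartition.existsUnique_mem {s : Finset (Set X)} (hs : IsFinPartition s) (x : X) :
    ∃! A : {A // A ∈ s}, x ∈ (A : Set X) := by
  obtain ⟨A, hA, hx⟩ : x ∈ ⋃₀ (s : Set (Set X)) := hs.2.1 ▸ mem_univ x
  exact ⟨⟨A, hA⟩, hx, fun B hB => Subtype.ext (hs.2.2.eq B.2 hA (not_disjoint_iff.2 ⟨x, hB, hx⟩))⟩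

/-- The element of the partition `s` containing `x`. As a function of `x` this is the coding map
attached to `s`, with the elements of `s` as labels. -/
noncomputable def IsFinPartition.cell {s : Finset (Set X)} (hs : IsFinPartition s) (x : X) :
    {A // A ∈ s} :=
  (hs.existsUnique_mem x).choose

variable {s : Finset (Set X)} (hs : IsFinPartition s)

lemma IsFinPartition.mem_cell (x : X) : x ∈ (hs.cell x : Set X) :=
  (hs.existsUnique_mem x).choose_spec.1

lemma IsFinPartition.cell_preimage_singleton (A : {A // A ∈ s}) : hs.cell ⁻¹' {A} = A := by
  ext x
  exact ⟨fun h => h ▸ hs.mem_cell x,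
    fun h => (hs.existsUnique_mem x).unique (hs.mem_cell x) h⟩

lemma IsFinPartition.dynH_eq_sum_negMulLog (f : X → X) (μ : Measure X) (q : ℕ) :
    dynH f μ s q = ∑ w, Real.negMulLog (μ.real (itinerary f hs.cell q ⁻¹' {w})) := by
  simp only [dynH, itinerary_preimage_singleton, hs.cell_preimage_singleton, Real.negMulLog,
    neg_mul, Finset.sum_neg_distrib, measureReal_def]

lemma isFinPartition_image_disjointed {ι : Type*} [Fintype ι] [LinearOrder ι]
    [LocallyFiniteOrderBot ι] [DecidableEq (Set X)] {U : ι → Set X}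
    (hU : ∀ i, MeasurableSet (U i)) (hcov : ⋃ i, U i = univ) :
    IsFinPartition (Finset.univ.image (disjointed U)) := by
  refine ⟨?_, ?_, ?_⟩
  · simp only [Finset.mem_image, Finset.mem_univ, true_and, forall_exists_index,
      forall_apply_eq_imp_iff]
    exact fun i => disjointedRec (p := MeasurableSet) (fun _ _ ht => ht.diff (hU _)) (hU i)
  · rw [Finset.coe_image, Finset.coe_univ, image_univ, sUnion_range, iUnion_disjointed, hcov]
  · rw [Finset.coe_image, Finset.coe_univ, image_univ]
    exact (disjoint_disjointed U).range_pairwise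

lemma exists_isFinPartition_null_frontier_dist_le [PseudoMetricSpace X]
    [OpensMeasurableSpace X] (hX : TotallyBounded (univ : Set X)) (μ : Measure X) [SFinite μ]
    {ε : ℝ} (hε : 0 < ε) :
    ∃ s : Finset (Set X), IsFinPartition s ∧ (∀ A ∈ s, μ (frontier A) = 0) ∧
      ∀ A ∈ s, ∀ x ∈ A, ∀ y ∈ A, dist x y ≤ ε := by
  classical
  obtain ⟨t, ht, htX⟩ := Metric.totallyBounded_iff.1 hX (ε / 4) (by positivity)
  obtain ⟨k, z, -, rfl⟩ := ht.fin_param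
  have hradius (i : Fin k) : ∃ r ∈ Ioo (ε / 4) (ε / 2), μ (frontier (Metric.ball (z i) r)) = 0 := by
    simpa only [Metric.thickening_singleton] using
      exists_null_frontier_thickening μ {z i} (by linarith)
  choose r hr hfr using hradius
  have hcov : ⋃ i, Metric.ball (z i) (r i) = univ := by
    rw [biUnion_range] at htX
    exact univ_subset_iff.1 (htX.trans (iUnion_mono fun i => Metric.ball_subset_ball (hr i).1.le))
  refine ⟨_, isFinPartition_image_disjointed (fun i => measurableSet_ball) hcov, ?_, ?_⟩ <;>
    simp only [Finset.mem_image, Finset.mem_univ, true_and, forall_exists_index,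
      forall_apply_eq_imp_iff]
  · exact fun i => disjointedRec (p := fun A => μ (frontier A) = 0)
      (fun _ _ ht => null_frontier_diff ht (hfr _)) (hfr i)
  · intro i x hx y hy
    have hx := Metric.mem_ball.1 (disjointed_subset _ i hx)
    have hy := Metric.mem_ball.1 (disjointed_subset _ i hy)
    linarith [dist_triangle_right x y (z i), (hr i).2]

end Partition

lemma SPbar_eq_iSup_iInf_expGrowthSup {X : Type*} [MetricSpace X] [MeasurableSpace X]
    [OpensMeasurableSpace X] (f : X → X) (φ : X → ℝ) (μ : ProbabilityMeasure X) :
    SPbar f φ μ =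
      ⨆ (ε : ℝ) (_ : 0 < ε), ⨅ F ∈ 𝓝 μ, ExpGrowth.expGrowthSup (Psep f φ F · ε) := by
  simp only [SPbar, ExpGrowth.expGrowthSup, EReal.div_eq_inv_mul, EReal.coe_inv,
    EReal.coe_natCast]

end Paper

theorem SPbar_le_free_energy_general {X : Type*} [MetricSpace X] [MeasurableSpace X]
    [OpensMeasurableSpace X] (hX : TotallyBounded (univ : Set X)) {f : X → X} (hf : Continuous f)
    (φ : X →ᵇ ℝ) (μ : ProbabilityMeasure X) (hinv : MeasurePreserving f (μ : Measure X) μ) :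
    SPbar f φ μ ≤ ksEntropy f (μ : Measure X) + ((∫ x, φ x ∂(μ : Measure X) : ℝ) : EReal) := by
  rw [SPbar_eq_iSup_iInf_expGrowthSup]
  refine iSup₂_le fun ε hε => ?_
  obtain ⟨s, hs, hfr, hdist⟩ :=
    exists_isFinPartition_null_frontier_dist_le hX (μ : Measure X) hε
  rw [← EReal.sub_le_iff_le_add (.inl (EReal.coe_ne_bot _)) (.inl (EReal.coe_ne_top _))]
  refine le_iSup₂_of_le s hs (le_liminf_of_le (by isBoundedDefault) ?_)
  filter_upwards [eventually_gt_atTop 0] with q hq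
  refine EReal.sub_le_of_le_add ?_
  rw [← EReal.coe_add, hs.dynH_eq_sum_negMulLog]
  refine iInf_expGrowthSup_Psep_le hf φ hinv.quasiMeasurePreserving ?_ ?_ ?_ hq
  · exact fun A => by simpa only [hs.cell_preimage_singleton] using hs.1 A A.2
  · exact fun A => by simpa only [hs.cell_preimage_singleton] using hfr A A.2
  · exact fun x y hxy => hdist _ (hs.cell x).2 x (hs.mem_cell x) y (hxy ▸ hs.mem_cell y)

/-- Step 1 of Theorem 4.9: for any invariant measure `μ` with finite entropy,
`SP̄_μ(f,φ) ≤ h_μ(f) + ∫φ dμ`. -/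
theorem SPbar_le_free_energy {X : Type*} [MetricSpace X] [CompactSpace X] [MeasurableSpace X] [BorelSpace X]
    (f : X → X) (hf : Continuous f) (φ : X → ℝ) (hφ : Continuous φ)
    (μ : Measure X) (hp : IsProbabilityMeasure μ) (hinv : MeasurePreserving f μ μ)
    (hfin : ksEntropy f μ < ⊤) :
    SPbar f φ (⟨μ, hp⟩ : MeasureTheory.ProbabilityMeasure X) ≤
      ksEntropy f μ + ((∫ x, φ x ∂μ : ℝ) : EReal) :=
  SPbar_le_free_energy_general isCompact_univ.totallyBounded hf (.mkOfCompact ⟨φ, hφ⟩) ⟨μ, hp⟩ hinv
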